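/- Let ω : ℕ → ℝ be a non-increasing function with 0 < ω(k) ≤ 1 for all k ≥ 1. Define B(ω) = ∑_{ν≥0} 2^{-ν} log(1/ω(2^{ν+1})) and Γ(ω) = ∑_{k≥1} (1/(k(k+1))) log(1/ω(k)). Then Γ(ω) ≤ (1/2) B(ω) ≤ 2 Γ(ω) - log(1/ω(1)). -/

import Mathlib

theorem aux_tele (a j : ℕ) :
    ∑ k ∈ Finset.Ico a (a + j), (1 : ℝ) / (((k : ℝ) + 1) * (k + 2))
      = 1 / ((a : ℝ) + 1) - 1 / ((a : ℝ) + j + 1) := by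
  induction j with
  | zero => simp
  | succ j ih =>
    rw [← add_assoc, Finset.sum_Ico_succ_top (by omega), ih]
    push_cast
    have h1 : (a : ℝ) + 1 ≠ 0 := by positivity
    have h2 : (a : ℝ) + j + 1 ≠ 0 := by positivity
    have h3 : (a : ℝ) + j + 2 ≠ 0 := by positivity
    have h4 : (a : ℝ) + (j + 1) + 1 ≠ 0 := by positivity
    field_simp
    ring

theorem aux_block (n : ℕ) :
    ∑ k ∈ Finset.Ico ((2 : ℕ) ^ n - 1) ((2 : ℕ) ^ (n + 1) - 1), (1 : ℝ) / (((k : ℝ) + 1) * (k + 2))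
      = 1 / 2 ^ (n + 1) := by
  have hp : (1 : ℕ) ≤ 2 ^ n := Nat.one_le_two_pow
  have e : (2 : ℕ) ^ (n + 1) - 1 = (2 ^ n - 1) + 2 ^ n := by rw [pow_succ]; omega
  rw [e, aux_tele]
  push_cast [Nat.cast_sub hp]
  have : (2 : ℝ) ^ n ≠ 0 := by positivity
  rw [pow_succ]
  have h2 : (2 : ℝ) ^ n - 1 + 2 ^ n + 1 = 2 ^ n * 2 := by ring
  rw [h2, sub_add_cancel]
  field_simp
  norm_num

theorem aux_bounds (L : ℕ → ℝ) (hm : ∀ a b : ℕ, 1 ≤ a → a ≤ b → L a ≤ L b) (n : ℕ) :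
    ∑ k ∈ Finset.range (2 ^ n - 1), L (k + 1) / (((k : ℝ) + 1) * (k + 2))
      ≤ ∑ v ∈ Finset.range n, L (2 ^ (v + 1)) / 2 ^ (v + 1) ∧
    ∑ v ∈ Finset.range n, L (2 ^ v) / 2 ^ (v + 1)
      ≤ ∑ k ∈ Finset.range (2 ^ n - 1), L (k + 1) / (((k : ℝ) + 1) * (k + 2)) := by
  induction n with
  | zero => simp
  | succ n ih =>
    have hp : (1 : ℕ) ≤ 2 ^ n := Nat.one_le_two_pow
    have hq : 2 ^ n - 1 ≤ 2 ^ (n + 1) - 1 := by rw [pow_succ]; omega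
    rw [Finset.sum_range_succ, Finset.sum_range_succ, ← Finset.sum_range_add_sum_Ico _ hq]
    constructor
    · refine add_le_add ih.1 ?_
      rw [div_eq_mul_one_div, ← aux_block, Finset.mul_sum]
      refine Finset.sum_le_sum fun k hk => ?_
      rw [div_eq_mul_one_div]
      rw [Finset.mem_Ico] at hk
      exact mul_le_mul_of_nonneg_right (hm _ _ (by omega) (by omega)) (by positivity)
    · refine add_le_add ih.2 ?_
      rw [div_eq_mul_one_div, ← aux_block, Finset.mul_sum]
      refine Finset.sum_le_sum fun k hk => ?_
      rw [div_eq_mul_one_div (L (k + 1))]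
      rw [Finset.mem_Ico] at hk
      exact mul_le_mul_of_nonneg_right (hm _ _ (by omega) (by omega)) (by positivity)

theorem aux_main (L : ℕ → ℝ) (hm : ∀ a b : ℕ, 1 ≤ a → a ≤ b → L a ≤ L b)
    (h0 : ∀ a : ℕ, 1 ≤ a → 0 ≤ L a) :
    (∑' k : ℕ, ENNReal.ofReal (L (k + 1) / ((k + 1) * (k + 2))))
      ≤ (∑' v : ℕ, ENNReal.ofReal (L (2 ^ (v + 1)) / 2 ^ v)) / 2 ∧
    (∑' v : ℕ, ENNReal.ofReal (L (2 ^ (v + 1)) / 2 ^ v)) / 2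
      ≤ 2 * (∑' k : ℕ, ENNReal.ofReal (L (k + 1) / ((k + 1) * (k + 2))))
          - ENNReal.ofReal (L 1) := by
  have hL : ∀ v : ℕ, 0 ≤ L (2 ^ v) := fun v => h0 _ Nat.one_le_two_pow
  have hk0 : ∀ k : ℕ, 0 ≤ L (k + 1) / (((k : ℝ) + 1) * (k + 2)) := fun k =>
    div_nonneg (h0 _ (by omega)) (by positivity)
  have hB : (∑' v : ℕ, ENNReal.ofReal (L (2 ^ (v + 1)) / 2 ^ v)) / 2
      = ∑' v : ℕ, ENNReal.ofReal (L (2 ^ (v + 1)) / 2 ^ (v + 1)) := by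
    rw [div_eq_mul_inv, ← ENNReal.tsum_mul_right]
    refine tsum_congr fun v => ?_
    rw [← div_eq_mul_inv, pow_succ (2 : ℝ), ← div_div,
      ENNReal.ofReal_div_of_pos (y := 2) (by norm_num)]
    simp
  rw [hB]
  constructor
  · refine ENNReal.tsum_le_of_sum_range_le fun n => ?_
    have hn : n ≤ 2 ^ n - 1 := by have := Nat.lt_two_pow_self (n := n); omega
    calc _ ≤ ∑ k ∈ Finset.range (2 ^ n - 1),
            ENNReal.ofReal (L (k + 1) / (((k : ℝ) + 1) * (k + 2))) :=
          Finset.sum_le_sum_of_subset (Finset.range_mono hn)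
      _ ≤ ∑ v ∈ Finset.range n, ENNReal.ofReal (L (2 ^ (v + 1)) / 2 ^ (v + 1)) := by
          rw [← ENNReal.ofReal_sum_of_nonneg fun k _ => hk0 k,
            ← ENNReal.ofReal_sum_of_nonneg fun v _ => div_nonneg (hL _) (by positivity)]
          exact ENNReal.ofReal_le_ofReal (aux_bounds L hm n).1
      _ ≤ _ := ENNReal.sum_le_tsum _
  · refine ENNReal.le_sub_of_add_le_right ENNReal.ofReal_ne_top ?_
    have h1 : (∑' v : ℕ, ENNReal.ofReal (L (2 ^ (v + 1)) / 2 ^ (v + 1))) + ENNReal.ofReal (L 1)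
        = ∑' v : ℕ, ENNReal.ofReal (L (2 ^ v) / 2 ^ v) := by
      rw [tsum_eq_zero_add' (f := fun v : ℕ => ENNReal.ofReal (L (2 ^ v) / 2 ^ v)) ENNReal.summable,
        add_comm]
      simp
    have h2 : ∑' v : ℕ, ENNReal.ofReal (L (2 ^ v) / 2 ^ v)
        = 2 * ∑' v : ℕ, ENNReal.ofReal (L (2 ^ v) / 2 ^ (v + 1)) := by
      rw [← ENNReal.tsum_mul_left]
      refine tsum_congr fun v => ?_
      have : (2 : ENNReal) = ENNReal.ofReal 2 := by simp
      rw [this, ← ENNReal.ofReal_mul (by norm_num)]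
      congr 1
      rw [pow_succ]
      field_simp
    rw [h1, h2]
    refine mul_le_mul' le_rfl ?_
    refine ENNReal.tsum_le_of_sum_range_le fun n => ?_
    calc _ ≤ ∑ k ∈ Finset.range (2 ^ n - 1),
            ENNReal.ofReal (L (k + 1) / (((k : ℝ) + 1) * (k + 2))) := by
          rw [← ENNReal.ofReal_sum_of_nonneg fun k _ => hk0 k,
            ← ENNReal.ofReal_sum_of_nonneg fun v _ => div_nonneg (hL _) (by positivity)]
          exact ENNReal.ofReal_le_ofReal (aux_bounds L hm n).2
      _ ≤ _ := ENNReal.sum_le_tsum _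

/-- For a non-increasing `ω : ℕ → ℝ` with `0 < ω k ≤ 1` for `k ≥ 1`,
with `B(ω) = ∑_{ν≥0} 2^{-ν} log(1/ω(2^{ν+1}))` and
`Γ(ω) = ∑_{k≥1} log(1/ω(k))/(k(k+1))` (series in `ℝ≥0∞`), one has
`Γ(ω) ≤ (1/2)·B(ω) ≤ 2·Γ(ω) − log(1/ω 1)`. -/
theorem stmt_1 (ω : ℕ → ℝ) (hanti : ∀ a b : ℕ, a ≤ b → ω b ≤ ω a)
    (hpos : ∀ k : ℕ, 1 ≤ k → 0 < ω k) (hle : ∀ k : ℕ, 1 ≤ k → ω k ≤ 1) :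
    (∑' k : ℕ, ENNReal.ofReal (Real.log (1 / ω (k + 1)) / ((k + 1) * (k + 2))))
      ≤ (∑' ν : ℕ, ENNReal.ofReal (Real.log (1 / ω (2 ^ (ν + 1))) / 2 ^ ν)) / 2 ∧
    (∑' ν : ℕ, ENNReal.ofReal (Real.log (1 / ω (2 ^ (ν + 1))) / 2 ^ ν)) / 2
      ≤ 2 * (∑' k : ℕ, ENNReal.ofReal (Real.log (1 / ω (k + 1)) / ((k + 1) * (k + 2))))
          - ENNReal.ofReal (Real.log (1 / ω 1)) := by
  refine aux_main (fun k => Real.log (1 / ω k)) (fun a b ha hab => ?_) (fun a ha => ?_)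
  · have hb := hpos b (ha.trans hab)
    have h := hpos a ha
    exact Real.log_le_log (by positivity) (one_div_le_one_div_of_le hb (hanti a b hab))
  · exact Real.log_nonneg (one_le_one_div (hpos a ha) (hle a ha))
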